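/- Transition soundness: suppose ⟨Σ; (G₁,…,Gₖ); ∇⟩ → ⟨Σ′; (G′₁,…,G′ₘ); ∇′⟩ is an operational transition relative to Δ, and suppose Σ′;Δ ⟶ G′ⱼ ↘ C′ⱼ is derivable for each j = 1,…,m. Then there exist constraints C₁,…,Cₖ such that (1) Σ;Δ ⟶ Gᵢ ↘ Cᵢ is derivable for each i = 1,…,k, and (2) for every ground substitution θ:Σ′ with ⊨ θ(E) for every E ∈ ∇′ ∪ {C′₁,…,C′ₘ}, also ⊨ θ(E) for every E ∈ ∇ ∪ {C₁,…,Cₖ}. -/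

import Mathlib

/-!
Transition soundness is proved by cases on the transition. The residual constraint of the new
leading goal (or pair of goals) is turned into one for the old leading goal by the matching
residuation rule; the remaining goals keep their residual constraints, because residuated
derivations never inspect the context (`RG.ctx`). Only the two quantifier steps need an argument
about satisfaction.

* For `∃X:σ.G`, the term `θ X` witnesses `∃X` (`ConSat.ex_intro`). As `θ` need not be ground on
  undeclared variables, instantiating `X` afterwards may also act on open values of `θ`; this is
  harmless, since satisfaction is preserved by ground instantiation (`ConSat.substSingle`).
* For `Иa:ν.G`, satisfaction is equivariant (`ConSat.rename`), so a constraint that holds of `a`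
  holds after swapping `a` with any other name of its sort (`ConSat.nu_intro`).
-/

/-!  Nominal logic programming: common infrastructure. -/

noncomputable section
open scoped Classical
set_option linter.unusedVariables false
set_option linter.unreachableTactic false
set_option linter.unusedTactic false

/-- Sorts of a nominal signature: name sorts `ν`, data sorts `δ`,
and abstraction sorts `⟨ν⟩σ`. -/
inductive NomSort (N D : Type) : Type
  | name : N → NomSort N D
  | data : D → NomSort N D
  | nabs : N → NomSort N D → NomSort N D

/-- A nominal (many-sorted, first-order) signature. -/
structure NomSig : Type 1 where
  NSort : Type
  DSort : Type
  Func : Type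
  Rel : Type
  fArgs : Func → List (NomSort NSort DSort)
  fRes : Func → DSort
  rArgs : Rel → List (NomSort NSort DSort)

/-- Names: countably infinitely many for each name sort. -/
abbrev NomSig.Name (L : NomSig) : Type := L.NSort × ℕ

variable {L : NomSig}

/-- The transposition (a b) acting on names. -/
def swapName (a b c : L.Name) : L.Name :=
  if c = a then b else if c = b then a else c

/-- Nominal terms (possibly containing variables). -/
inductive Tm (L : NomSig) : Type
  | var : ℕ → Tm L
  | name : L.Name → Tm L
  | app : L.Func → List (Tm L) → Tm L
  | abs : L.Name → Tm L → Tm L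

namespace Tm

/-- Apply a renaming of names to every name occurrence (including binding ones). -/
def rename (f : L.Name → L.Name) : Tm L → Tm L
  | var X => var X
  | name c => name (f c)
  | app g ts => app g (ts.attach.map fun x => rename f x.1)
  | abs c t => abs (f c) (rename f t)
decreasing_by
  all_goals simp_wf
  all_goals first
    | (have := List.sizeOf_lt_of_mem x.2; omega)
    | omega

/-- The swapping `(a b)·t`. -/
def swap (a b : L.Name) (t : Tm L) : Tm L := t.rename (swapName a b)

/-- Apply a substitution of terms for variables. -/
def subst (θ : ℕ → Tm L) : Tm L → Tm L
  | var X => θ X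
  | name c => name c
  | app g ts => app g (ts.attach.map fun x => subst θ x.1)
  | abs c t => abs c (subst θ t)
decreasing_by
  all_goals simp_wf
  all_goals first
    | (have := List.sizeOf_lt_of_mem x.2; omega)
    | omega

/-- Syntactic free-name occurrence (a name occurring outside the scope of
an abstraction of the same name). -/
inductive FNa : L.Name → Tm L → Prop
  | name (a : L.Name) : FNa a (name a)
  | app (a : L.Name) (f : L.Func) (ts : List (Tm L)) (t : Tm L) :
      t ∈ ts → FNa a t → FNa a (app f ts)
  | abs (a b : L.Name) (t : Tm L) : a ≠ b → FNa a t → FNa a (abs b t)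

/-- Free variable occurrence in a term. -/
inductive FVa : ℕ → Tm L → Prop
  | var (X : ℕ) : FVa X (var X)
  | app (X : ℕ) (f : L.Func) (ts : List (Tm L)) (t : Tm L) :
      t ∈ ts → FVa X t → FVa X (app f ts)
  | abs (X : ℕ) (b : L.Name) (t : Tm L) : FVa X t → FVa X (abs b t)

end Tm

/-- The substitution `[t/X]`. -/
def substSingle (X : ℕ) (t : Tm L) : ℕ → Tm L := fun Y => if Y = X then t else Tm.var Y

/-- `IsTm t σ`: `t` is a well-sorted ground term of sort `σ`. -/
inductive IsTm : Tm L → NomSort L.NSort L.DSort → Prop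
  | name (a : L.Name) : IsTm (Tm.name a) (NomSort.name a.1)
  | app (f : L.Func) (ts : List (Tm L)) :
      ts.length = (L.fArgs f).length →
      (∀ p ∈ ts.zip (L.fArgs f), IsTm p.1 p.2) →
      IsTm (Tm.app f ts) (NomSort.data (L.fRes f))
  | abs (a : L.Name) (t : Tm L) (σ : NomSort L.NSort L.DSort) :
      IsTm t σ → IsTm (Tm.abs a t) (NomSort.nabs a.1 σ)

/-- Well-sortedness of a (possibly open) term relative to a sort
assignment `vs` for variables. -/
inductive TmS (vs : ℕ → NomSort L.NSort L.DSort) : Tm L → NomSort L.NSort L.DSort → Prop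
  | var (X : ℕ) : TmS vs (Tm.var X) (vs X)
  | name (a : L.Name) : TmS vs (Tm.name a) (NomSort.name a.1)
  | app (f : L.Func) (ts : List (Tm L)) :
      ts.length = (L.fArgs f).length →
      (∀ p ∈ ts.zip (L.fArgs f), TmS vs p.1 p.2) →
      TmS vs (Tm.app f ts) (NomSort.data (L.fRes f))
  | abs (a : L.Name) (t : Tm L) (σ : NomSort L.NSort L.DSort) :
      TmS vs t σ → TmS vs (Tm.abs a t) (NomSort.nabs a.1 σ)

/-- Freshness `a # t` on ground terms. -/
inductive Fresh : L.Name → Tm L → Prop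
  | name (a b : L.Name) : a ≠ b → Fresh a (Tm.name b)
  | app (a : L.Name) (f : L.Func) (ts : List (Tm L)) :
      (∀ t ∈ ts, Fresh a t) → Fresh a (Tm.app f ts)
  | absSame (a : L.Name) (t : Tm L) : Fresh a (Tm.abs a t)
  | absDiff (a b : L.Name) (t : Tm L) : a ≠ b → Fresh a t → Fresh a (Tm.abs b t)

/-- Alpha-equivalence `t ≈ u` on ground terms. -/
inductive Aeq : Tm L → Tm L → Prop
  | name (a : L.Name) : Aeq (Tm.name a) (Tm.name a)
  | app (f : L.Func) (ts us : List (Tm L)) :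
      ts.length = us.length → (∀ p ∈ ts.zip us, Aeq p.1 p.2) →
      Aeq (Tm.app f ts) (Tm.app f us)
  | absSame (a : L.Name) (t u : Tm L) : Aeq t u → Aeq (Tm.abs a t) (Tm.abs a u)
  | absDiff (a b : L.Name) (t u : Tm L) :
      Fresh a u → Aeq t (Tm.swap a b u) → Aeq (Tm.abs a t) (Tm.abs b u)

/-- The support of a ground term: the set of names not fresh for it. -/
def suppTm (t : Tm L) : Set L.Name := {a | ¬ Fresh a t}

/-- Finite sort-preserving bijections (permutations) of names. -/
def IsPerm (π : L.Name → L.Name) : Prop :=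
  Function.Bijective π ∧ (∀ a, (π a).1 = a.1) ∧ {a | π a ≠ a}.Finite

/-- `t ∼ u`: equal up to a permutation of names. -/
def SimTm (t u : Tm L) : Prop := ∃ π, IsPerm π ∧ Aeq (t.rename π) u

/-- Atomic formulas `p(t₁,…,tₙ)`. -/
structure NAtom (L : NomSig) : Type where
  rel : L.Rel
  args : List (Tm L)

def NAtom.rename (f : L.Name → L.Name) (A : NAtom L) : NAtom L :=
  ⟨A.rel, A.args.map (Tm.rename f)⟩

def NAtom.swap (a b : L.Name) (A : NAtom L) : NAtom L := A.rename (swapName a b)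

def NAtom.subst (θ : ℕ → Tm L) (A : NAtom L) : NAtom L :=
  ⟨A.rel, A.args.map (Tm.subst θ)⟩

def NAtom.FNa (a : L.Name) (A : NAtom L) : Prop := ∃ t ∈ A.args, Tm.FNa a t
def NAtom.FVa (X : ℕ) (A : NAtom L) : Prop := ∃ t ∈ A.args, Tm.FVa X t

/-- Alpha-equivalence of atoms. -/
def AtomAeq (A B : NAtom L) : Prop :=
  A.rel = B.rel ∧ A.args.length = B.args.length ∧ ∀ p ∈ A.args.zip B.args, Aeq p.1 p.2

/-- `A ∼ B` for atoms: equal up to a permutation of names. -/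
def AtomSim (A B : NAtom L) : Prop := ∃ π, IsPerm π ∧ AtomAeq (A.rename π) B

/-- Well-sortedness of an atom relative to a variable sort assignment. -/
def AtomS (vs : ℕ → NomSort L.NSort L.DSort) (A : NAtom L) : Prop :=
  A.args.length = (L.rArgs A.rel).length ∧ ∀ p ∈ A.args.zip (L.rArgs A.rel), TmS vs p.1 p.2

/-- The Herbrand base: all well-sorted ground atoms. -/
def BL (L : NomSig) : Set (NAtom L) :=
  {A | A.args.length = (L.rArgs A.rel).length ∧ ∀ p ∈ A.args.zip (L.rArgs A.rel), IsTm p.1 p.2}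

/-- An equivariant set of atoms: closed under all same-sorted swappings. -/
def EquivariantSet (S : Set (NAtom L)) : Prop :=
  ∀ a b : L.Name, a.1 = b.1 → NAtom.swap a b '' S = S


/-! ### Constraints -/

/-- Constraints `C`. -/
inductive NCon (L : NomSig) : Type
  | tt : NCon L
  | eq (t u : Tm L) : NCon L
  | fr (a : L.Name) (t : Tm L) : NCon L
  | sim (t u : Tm L) : NCon L
  | simA (A B : NAtom L) : NCon L
  | aeqA (A B : NAtom L) : NCon L
  | and (C C' : NCon L) : NCon L
  | ex (X : ℕ) (σ : NomSort L.NSort L.DSort) (C : NCon L) : NCon L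
  | nu (a : L.Name) (C : NCon L) : NCon L

namespace NCon

def rename (f : L.Name → L.Name) : NCon L → NCon L
  | tt => tt
  | eq t u => eq (t.rename f) (u.rename f)
  | fr a t => fr (f a) (t.rename f)
  | sim t u => sim (t.rename f) (u.rename f)
  | simA A B => simA (A.rename f) (B.rename f)
  | aeqA A B => aeqA (A.rename f) (B.rename f)
  | and C C' => and (rename f C) (rename f C')
  | ex X σ C => ex X σ (rename f C)
  | nu a C => nu (f a) (rename f C)

/-- Swapping `(a b)·C`, acting on all names (bound names included). -/
def swap (a b : L.Name) (C : NCon L) : NCon L := C.rename (swapName a b)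

def subst (θ : ℕ → Tm L) : NCon L → NCon L
  | tt => tt
  | eq t u => eq (t.subst θ) (u.subst θ)
  | fr a t => fr a (t.subst θ)
  | sim t u => sim (t.subst θ) (u.subst θ)
  | simA A B => simA (A.subst θ) (B.subst θ)
  | aeqA A B => aeqA (A.subst θ) (B.subst θ)
  | and C C' => and (subst θ C) (subst θ C')
  | ex X σ C => ex X σ (subst (Function.update θ X (Tm.var X)) C)
  | nu a C => nu a (subst θ C)

def size : NCon L → ℕ
  | and C C' => size C + size C' + 1
  | ex _ _ C => size C + 1
  | nu _ C => size C + 1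
  | _ => 1

@[simp] theorem size_rename (f : L.Name → L.Name) :
    ∀ C : NCon L, (C.rename f).size = C.size := by
  intro C; induction C <;> simp [rename, size, *]

@[simp] theorem size_swap (a b : L.Name) (C : NCon L) : (C.swap a b).size = C.size :=
  size_rename _ C

@[simp] theorem size_subst :
    ∀ (C : NCon L) (θ : ℕ → Tm L), (C.subst θ).size = C.size := by
  intro C; induction C <;> intro θ <;> simp [subst, size, *]

/-- Free names of a constraint. -/
inductive FNa : L.Name → NCon L → Prop
  | eq₁ (a : L.Name) (t u : Tm L) : Tm.FNa a t → FNa a (eq t u)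
  | eq₂ (a : L.Name) (t u : Tm L) : Tm.FNa a u → FNa a (eq t u)
  | frN (a : L.Name) (t : Tm L) : FNa a (fr a t)
  | frT (a c : L.Name) (t : Tm L) : Tm.FNa a t → FNa a (fr c t)
  | sim₁ (a : L.Name) (t u : Tm L) : Tm.FNa a t → FNa a (sim t u)
  | sim₂ (a : L.Name) (t u : Tm L) : Tm.FNa a u → FNa a (sim t u)
  | simA₁ (a : L.Name) (A B : NAtom L) : NAtom.FNa a A → FNa a (simA A B)
  | simA₂ (a : L.Name) (A B : NAtom L) : NAtom.FNa a B → FNa a (simA A B)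
  | aeqA₁ (a : L.Name) (A B : NAtom L) : NAtom.FNa a A → FNa a (aeqA A B)
  | aeqA₂ (a : L.Name) (A B : NAtom L) : NAtom.FNa a B → FNa a (aeqA A B)
  | and₁ (a : L.Name) (C C' : NCon L) : FNa a C → FNa a (and C C')
  | and₂ (a : L.Name) (C C' : NCon L) : FNa a C' → FNa a (and C C')
  | ex (a : L.Name) (X : ℕ) (σ : NomSort L.NSort L.DSort) (C : NCon L) :
      FNa a C → FNa a (ex X σ C)
  | nu (a c : L.Name) (C : NCon L) : a ≠ c → FNa a C → FNa a (nu c C)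

/-- Free variables of a constraint. -/
inductive FVa : ℕ → NCon L → Prop
  | eq₁ (X : ℕ) (t u : Tm L) : Tm.FVa X t → FVa X (eq t u)
  | eq₂ (X : ℕ) (t u : Tm L) : Tm.FVa X u → FVa X (eq t u)
  | frT (X : ℕ) (c : L.Name) (t : Tm L) : Tm.FVa X t → FVa X (fr c t)
  | sim₁ (X : ℕ) (t u : Tm L) : Tm.FVa X t → FVa X (sim t u)
  | sim₂ (X : ℕ) (t u : Tm L) : Tm.FVa X u → FVa X (sim t u)
  | simA₁ (X : ℕ) (A B : NAtom L) : NAtom.FVa X A → FVa X (simA A B)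
  | simA₂ (X : ℕ) (A B : NAtom L) : NAtom.FVa X B → FVa X (simA A B)
  | aeqA₁ (X : ℕ) (A B : NAtom L) : NAtom.FVa X A → FVa X (aeqA A B)
  | aeqA₂ (X : ℕ) (A B : NAtom L) : NAtom.FVa X B → FVa X (aeqA A B)
  | and₁ (X : ℕ) (C C' : NCon L) : FVa X C → FVa X (and C C')
  | and₂ (X : ℕ) (C C' : NCon L) : FVa X C' → FVa X (and C C')
  | ex (X X' : ℕ) (σ : NomSort L.NSort L.DSort) (C : NCon L) :
      X ≠ X' → FVa X C → FVa X (ex X' σ C)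
  | nu (X : ℕ) (c : L.Name) (C : NCon L) : FVa X C → FVa X (nu c C)

/-- Well-sortedness of a constraint relative to a variable sort assignment. -/
def WS (vs : ℕ → NomSort L.NSort L.DSort) : NCon L → Prop
  | tt => True
  | eq t u => ∃ σ, TmS vs t σ ∧ TmS vs u σ
  | fr _ t => ∃ σ, TmS vs t σ
  | sim t u => ∃ σ, TmS vs t σ ∧ TmS vs u σ
  | simA A B => AtomS vs A ∧ AtomS vs B
  | aeqA A B => AtomS vs A ∧ AtomS vs B
  | and C C' => WS vs C ∧ WS vs C'
  | ex X σ C => WS (Function.update vs X σ) C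
  | nu _ C => WS vs C

end NCon

/-- Satisfaction `⊨ C` of a (closed) constraint. -/
def ConSat : NCon L → Prop
  | NCon.tt => True
  | NCon.eq t u => Aeq t u
  | NCon.fr a t => Fresh a t
  | NCon.sim t u => SimTm t u
  | NCon.simA A B => AtomSim A B
  | NCon.aeqA A B => AtomAeq A B
  | NCon.and C C' => ConSat C ∧ ConSat C'
  | NCon.ex X σ C => ∃ t : Tm L, IsTm t σ ∧ ConSat (C.subst (substSingle X t))
  | NCon.nu a C => ∀ b : L.Name, b.1 = a.1 → ¬ NCon.FNa b (NCon.nu a C) → ConSat (C.swap b a)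
termination_by C => C.size
decreasing_by all_goals (simp [NCon.size]; try omega)
/-! ### Goals -/

/-- Goal formulas `G`. -/
inductive NGoal (L : NomSig) : Type
  | tt : NGoal L
  | atom (A : NAtom L) : NGoal L
  | con (C : NCon L) : NGoal L
  | and (G G' : NGoal L) : NGoal L
  | or (G G' : NGoal L) : NGoal L
  | ex (X : ℕ) (σ : NomSort L.NSort L.DSort) (G : NGoal L) : NGoal L
  | nu (a : L.Name) (G : NGoal L) : NGoal L

namespace NGoal

def rename (f : L.Name → L.Name) : NGoal L → NGoal L
  | tt => tt
  | atom A => atom (A.rename f)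
  | con C => con (C.rename f)
  | and G G' => and (rename f G) (rename f G')
  | or G G' => or (rename f G) (rename f G')
  | ex X σ G => ex X σ (rename f G)
  | nu a G => nu (f a) (rename f G)

def swap (a b : L.Name) (G : NGoal L) : NGoal L := G.rename (swapName a b)

def subst (θ : ℕ → Tm L) : NGoal L → NGoal L
  | tt => tt
  | atom A => atom (A.subst θ)
  | con C => con (C.subst θ)
  | and G G' => and (subst θ G) (subst θ G')
  | or G G' => or (subst θ G) (subst θ G')
  | ex X σ G => ex X σ (subst (Function.update θ X (Tm.var X)) G)
  | nu a G => nu a (subst θ G)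

def size : NGoal L → ℕ
  | and G G' => size G + size G' + 1
  | or G G' => size G + size G' + 1
  | ex _ _ G => size G + 1
  | nu _ G => size G + 1
  | _ => 1

@[simp] theorem size_rename (f : L.Name → L.Name) :
    ∀ G : NGoal L, (G.rename f).size = G.size := by
  intro G; induction G <;> simp [rename, size, *]

@[simp] theorem size_swap (a b : L.Name) (G : NGoal L) : (G.swap a b).size = G.size :=
  size_rename _ G

@[simp] theorem size_subst :
    ∀ (G : NGoal L) (θ : ℕ → Tm L), (G.subst θ).size = G.size := by
  intro G; induction G <;> intro θ <;> simp [subst, size, *]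

/-- Free names of a goal. -/
inductive FNa : L.Name → NGoal L → Prop
  | atom (a : L.Name) (A : NAtom L) : NAtom.FNa a A → FNa a (atom A)
  | con (a : L.Name) (C : NCon L) : NCon.FNa a C → FNa a (con C)
  | and₁ (a : L.Name) (G G' : NGoal L) : FNa a G → FNa a (and G G')
  | and₂ (a : L.Name) (G G' : NGoal L) : FNa a G' → FNa a (and G G')
  | or₁ (a : L.Name) (G G' : NGoal L) : FNa a G → FNa a (or G G')
  | or₂ (a : L.Name) (G G' : NGoal L) : FNa a G' → FNa a (or G G')
  | ex (a : L.Name) (X : ℕ) (σ : NomSort L.NSort L.DSort) (G : NGoal L) :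
      FNa a G → FNa a (ex X σ G)
  | nu (a c : L.Name) (G : NGoal L) : a ≠ c → FNa a G → FNa a (nu c G)

/-- Free variables of a goal. -/
inductive FVa : ℕ → NGoal L → Prop
  | atom (X : ℕ) (A : NAtom L) : NAtom.FVa X A → FVa X (atom A)
  | con (X : ℕ) (C : NCon L) : NCon.FVa X C → FVa X (con C)
  | and₁ (X : ℕ) (G G' : NGoal L) : FVa X G → FVa X (and G G')
  | and₂ (X : ℕ) (G G' : NGoal L) : FVa X G' → FVa X (and G G')
  | or₁ (X : ℕ) (G G' : NGoal L) : FVa X G → FVa X (or G G')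
  | or₂ (X : ℕ) (G G' : NGoal L) : FVa X G' → FVa X (or G G')
  | ex (X X' : ℕ) (σ : NomSort L.NSort L.DSort) (G : NGoal L) :
      X ≠ X' → FVa X G → FVa X (ex X' σ G)
  | nu (X : ℕ) (c : L.Name) (G : NGoal L) : FVa X G → FVa X (nu c G)

/-- Well-sortedness of a goal relative to a variable sort assignment. -/
def WS (vs : ℕ → NomSort L.NSort L.DSort) : NGoal L → Prop
  | tt => True
  | atom A => AtomS vs A
  | con C => NCon.WS vs C
  | and G G' => WS vs G ∧ WS vs G'
  | or G G' => WS vs G ∧ WS vs G'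
  | ex X σ G => WS (Function.update vs X σ) G
  | nu _ G => WS vs G

end NGoal

/-- Satisfaction `S ⊨ G` of a (closed) goal by a Herbrand interpretation. -/
def GoalSat (S : Set (NAtom L)) : NGoal L → Prop
  | NGoal.tt => True
  | NGoal.atom A => A ∈ S
  | NGoal.con C => ConSat C
  | NGoal.and G G' => GoalSat S G ∧ GoalSat S G'
  | NGoal.or G G' => GoalSat S G ∨ GoalSat S G'
  | NGoal.ex X σ G => ∃ t : Tm L, IsTm t σ ∧ GoalSat S (G.subst (substSingle X t))
  | NGoal.nu a G => ∀ b : L.Name, b.1 = a.1 → ¬ NGoal.FNa b (NGoal.nu a G) →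
      GoalSat S (G.swap b a)
termination_by G => G.size
decreasing_by all_goals (simp [NGoal.size]; try omega)

/-! ### Program clauses -/

/-- Program clauses `D`. -/
inductive NCl (L : NomSig) : Type
  | tt : NCl L
  | atom (A : NAtom L) : NCl L
  | and (D D' : NCl L) : NCl L
  | imp (G : NGoal L) (D : NCl L) : NCl L
  | all (X : ℕ) (σ : NomSort L.NSort L.DSort) (D : NCl L) : NCl L
  | nu (a : L.Name) (D : NCl L) : NCl L

namespace NCl

def rename (f : L.Name → L.Name) : NCl L → NCl L
  | tt => tt
  | atom A => atom (A.rename f)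
  | and D D' => and (rename f D) (rename f D')
  | imp G D => imp (G.rename f) (rename f D)
  | all X σ D => all X σ (rename f D)
  | nu a D => nu (f a) (rename f D)

def swap (a b : L.Name) (D : NCl L) : NCl L := D.rename (swapName a b)

def subst (θ : ℕ → Tm L) : NCl L → NCl L
  | tt => tt
  | atom A => atom (A.subst θ)
  | and D D' => and (subst θ D) (subst θ D')
  | imp G D => imp (G.subst θ) (subst θ D)
  | all X σ D => all X σ (subst (Function.update θ X (Tm.var X)) D)
  | nu a D => nu a (subst θ D)

def size : NCl L → ℕ
  | and D D' => size D + size D' + 1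
  | imp _ D => size D + 1
  | all _ _ D => size D + 1
  | nu _ D => size D + 1
  | _ => 1

@[simp] theorem size_rename (f : L.Name → L.Name) :
    ∀ D : NCl L, (D.rename f).size = D.size := by
  intro D; induction D <;> simp [rename, size, *]

@[simp] theorem size_swap (a b : L.Name) (D : NCl L) : (D.swap a b).size = D.size :=
  size_rename _ D

@[simp] theorem size_subst :
    ∀ (D : NCl L) (θ : ℕ → Tm L), (D.subst θ).size = D.size := by
  intro D; induction D <;> intro θ <;> simp [subst, size, *]

/-- Free names of a program clause. -/
inductive FNa : L.Name → NCl L → Prop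
  | atom (a : L.Name) (A : NAtom L) : NAtom.FNa a A → FNa a (atom A)
  | and₁ (a : L.Name) (D D' : NCl L) : FNa a D → FNa a (and D D')
  | and₂ (a : L.Name) (D D' : NCl L) : FNa a D' → FNa a (and D D')
  | imp₁ (a : L.Name) (G : NGoal L) (D : NCl L) : NGoal.FNa a G → FNa a (imp G D)
  | imp₂ (a : L.Name) (G : NGoal L) (D : NCl L) : FNa a D → FNa a (imp G D)
  | all (a : L.Name) (X : ℕ) (σ : NomSort L.NSort L.DSort) (D : NCl L) :
      FNa a D → FNa a (all X σ D)
  | nu (a c : L.Name) (D : NCl L) : a ≠ c → FNa a D → FNa a (nu c D)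

/-- Free variables of a program clause. -/
inductive FVa : ℕ → NCl L → Prop
  | atom (X : ℕ) (A : NAtom L) : NAtom.FVa X A → FVa X (atom A)
  | and₁ (X : ℕ) (D D' : NCl L) : FVa X D → FVa X (and D D')
  | and₂ (X : ℕ) (D D' : NCl L) : FVa X D' → FVa X (and D D')
  | imp₁ (X : ℕ) (G : NGoal L) (D : NCl L) : NGoal.FVa X G → FVa X (imp G D)
  | imp₂ (X : ℕ) (G : NGoal L) (D : NCl L) : FVa X D → FVa X (imp G D)
  | all (X X' : ℕ) (σ : NomSort L.NSort L.DSort) (D : NCl L) :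
      X ≠ X' → FVa X D → FVa X (all X' σ D)
  | nu (X : ℕ) (c : L.Name) (D : NCl L) : FVa X D → FVa X (nu c D)

/-- Well-sortedness of a program clause relative to a variable sort assignment. -/
def WS (vs : ℕ → NomSort L.NSort L.DSort) : NCl L → Prop
  | tt => True
  | atom A => AtomS vs A
  | and D D' => WS vs D ∧ WS vs D'
  | imp G D => NGoal.WS vs G ∧ WS vs D
  | all X σ D => WS (Function.update vs X σ) D
  | nu _ D => WS vs D

/-- A clause with no free variables. -/
def ClosedV (D : NCl L) : Prop := ∀ X : ℕ, ¬ FVa X D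

/-- A clause with no free names. -/
def ClosedN (D : NCl L) : Prop := ∀ a : L.Name, ¬ FNa a D

/-- И-goal clauses: no И-quantified clause subformulas (goals may contain И). -/
inductive NuGoal : NCl L → Prop
  | tt : NuGoal tt
  | atom (A : NAtom L) : NuGoal (atom A)
  | and (D D' : NCl L) : NuGoal D → NuGoal D' → NuGoal (and D D')
  | imp (G : NGoal L) (D : NCl L) : NuGoal D → NuGoal (imp G D)
  | all (X : ℕ) (σ : NomSort L.NSort L.DSort) (D : NCl L) : NuGoal D → NuGoal (all X σ D)

end NCl

/-- Satisfaction `S ⊨ D` of a (closed) program clause. -/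
def ClSat (S : Set (NAtom L)) : NCl L → Prop
  | NCl.tt => True
  | NCl.atom A => A ∈ S
  | NCl.and D D' => ClSat S D ∧ ClSat S D'
  | NCl.imp G D => GoalSat S G → ClSat S D
  | NCl.all X σ D => ∀ t : Tm L, IsTm t σ → ClSat S (D.subst (substSingle X t))
  | NCl.nu a D => ∀ b : L.Name, b.1 = a.1 → ¬ NCl.FNa b (NCl.nu a D) →
      ClSat S (D.swap b a)
termination_by D => D.size
decreasing_by all_goals (simp [NCl.size]; try omega)
/-! ### General first-order nominal formulas -/

/-- Formulas of nominal logic. -/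
inductive NFm (L : NomSig) : Type
  | tt : NFm L
  | ff : NFm L
  | atom (A : NAtom L) : NFm L
  | eq (t u : Tm L) : NFm L
  | fr (a : L.Name) (t : Tm L) : NFm L
  | sim (t u : Tm L) : NFm L
  | imp (φ ψ : NFm L) : NFm L
  | and (φ ψ : NFm L) : NFm L
  | or (φ ψ : NFm L) : NFm L
  | all (X : ℕ) (σ : NomSort L.NSort L.DSort) (φ : NFm L) : NFm L
  | ex (X : ℕ) (σ : NomSort L.NSort L.DSort) (φ : NFm L) : NFm L
  | nu (a : L.Name) (φ : NFm L) : NFm L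

namespace NFm

def rename (f : L.Name → L.Name) : NFm L → NFm L
  | tt => tt
  | ff => ff
  | atom A => atom (A.rename f)
  | eq t u => eq (t.rename f) (u.rename f)
  | fr a t => fr (f a) (t.rename f)
  | sim t u => sim (t.rename f) (u.rename f)
  | imp φ ψ => imp (rename f φ) (rename f ψ)
  | and φ ψ => and (rename f φ) (rename f ψ)
  | or φ ψ => or (rename f φ) (rename f ψ)
  | all X σ φ => all X σ (rename f φ)
  | ex X σ φ => ex X σ (rename f φ)
  | nu a φ => nu (f a) (rename f φ)

/-- Swapping `(a b)·φ`. -/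
def swap (a b : L.Name) (φ : NFm L) : NFm L := φ.rename (swapName a b)

def subst (θ : ℕ → Tm L) : NFm L → NFm L
  | tt => tt
  | ff => ff
  | atom A => atom (A.subst θ)
  | eq t u => eq (t.subst θ) (u.subst θ)
  | fr a t => fr a (t.subst θ)
  | sim t u => sim (t.subst θ) (u.subst θ)
  | imp φ ψ => imp (subst θ φ) (subst θ ψ)
  | and φ ψ => and (subst θ φ) (subst θ ψ)
  | or φ ψ => or (subst θ φ) (subst θ ψ)
  | all X σ φ => all X σ (subst (Function.update θ X (Tm.var X)) φ)
  | ex X σ φ => ex X σ (subst (Function.update θ X (Tm.var X)) φ)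
  | nu a φ => nu a (subst θ φ)

def size : NFm L → ℕ
  | imp φ ψ => size φ + size ψ + 1
  | and φ ψ => size φ + size ψ + 1
  | or φ ψ => size φ + size ψ + 1
  | all _ _ φ => size φ + 1
  | ex _ _ φ => size φ + 1
  | nu _ φ => size φ + 1
  | _ => 1

@[simp] theorem size_rename (f : L.Name → L.Name) :
    ∀ φ : NFm L, (φ.rename f).size = φ.size := by
  intro φ; induction φ <;> simp [rename, size, *]

@[simp] theorem size_swap (a b : L.Name) (φ : NFm L) : (φ.swap a b).size = φ.size :=
  size_rename _ φ

@[simp] theorem size_subst :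
    ∀ (φ : NFm L) (θ : ℕ → Tm L), (φ.subst θ).size = φ.size := by
  intro φ; induction φ <;> intro θ <;> simp [subst, size, *]

/-- Free names of a formula. -/
inductive FNa : L.Name → NFm L → Prop
  | atom (a : L.Name) (A : NAtom L) : NAtom.FNa a A → FNa a (atom A)
  | eq₁ (a : L.Name) (t u : Tm L) : Tm.FNa a t → FNa a (eq t u)
  | eq₂ (a : L.Name) (t u : Tm L) : Tm.FNa a u → FNa a (eq t u)
  | frN (a : L.Name) (t : Tm L) : FNa a (fr a t)
  | frT (a c : L.Name) (t : Tm L) : Tm.FNa a t → FNa a (fr c t)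
  | sim₁ (a : L.Name) (t u : Tm L) : Tm.FNa a t → FNa a (sim t u)
  | sim₂ (a : L.Name) (t u : Tm L) : Tm.FNa a u → FNa a (sim t u)
  | imp₁ (a : L.Name) (φ ψ : NFm L) : FNa a φ → FNa a (imp φ ψ)
  | imp₂ (a : L.Name) (φ ψ : NFm L) : FNa a ψ → FNa a (imp φ ψ)
  | and₁ (a : L.Name) (φ ψ : NFm L) : FNa a φ → FNa a (and φ ψ)
  | and₂ (a : L.Name) (φ ψ : NFm L) : FNa a ψ → FNa a (and φ ψ)
  | or₁ (a : L.Name) (φ ψ : NFm L) : FNa a φ → FNa a (or φ ψ)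
  | or₂ (a : L.Name) (φ ψ : NFm L) : FNa a ψ → FNa a (or φ ψ)
  | all (a : L.Name) (X : ℕ) (σ : NomSort L.NSort L.DSort) (φ : NFm L) :
      FNa a φ → FNa a (all X σ φ)
  | ex (a : L.Name) (X : ℕ) (σ : NomSort L.NSort L.DSort) (φ : NFm L) :
      FNa a φ → FNa a (ex X σ φ)
  | nu (a c : L.Name) (φ : NFm L) : a ≠ c → FNa a φ → FNa a (nu c φ)

/-- Free variables of a formula. -/
inductive FVa : ℕ → NFm L → Prop
  | atom (X : ℕ) (A : NAtom L) : NAtom.FVa X A → FVa X (atom A)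
  | eq₁ (X : ℕ) (t u : Tm L) : Tm.FVa X t → FVa X (eq t u)
  | eq₂ (X : ℕ) (t u : Tm L) : Tm.FVa X u → FVa X (eq t u)
  | frT (X : ℕ) (c : L.Name) (t : Tm L) : Tm.FVa X t → FVa X (fr c t)
  | sim₁ (X : ℕ) (t u : Tm L) : Tm.FVa X t → FVa X (sim t u)
  | sim₂ (X : ℕ) (t u : Tm L) : Tm.FVa X u → FVa X (sim t u)
  | imp₁ (X : ℕ) (φ ψ : NFm L) : FVa X φ → FVa X (imp φ ψ)
  | imp₂ (X : ℕ) (φ ψ : NFm L) : FVa X ψ → FVa X (imp φ ψ)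
  | and₁ (X : ℕ) (φ ψ : NFm L) : FVa X φ → FVa X (and φ ψ)
  | and₂ (X : ℕ) (φ ψ : NFm L) : FVa X ψ → FVa X (and φ ψ)
  | or₁ (X : ℕ) (φ ψ : NFm L) : FVa X φ → FVa X (or φ ψ)
  | or₂ (X : ℕ) (φ ψ : NFm L) : FVa X ψ → FVa X (or φ ψ)
  | all (X X' : ℕ) (σ : NomSort L.NSort L.DSort) (φ : NFm L) :
      X ≠ X' → FVa X φ → FVa X (all X' σ φ)
  | ex (X X' : ℕ) (σ : NomSort L.NSort L.DSort) (φ : NFm L) :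
      X ≠ X' → FVa X φ → FVa X (ex X' σ φ)
  | nu (X : ℕ) (c : L.Name) (φ : NFm L) : FVa X φ → FVa X (nu c φ)

end NFm

/-- Satisfaction `S ⊨ φ` of a (closed) formula by a Herbrand interpretation. -/
def FmSat (S : Set (NAtom L)) : NFm L → Prop
  | NFm.tt => True
  | NFm.ff => False
  | NFm.atom A => A ∈ S
  | NFm.eq t u => Aeq t u
  | NFm.fr a t => Fresh a t
  | NFm.sim t u => SimTm t u
  | NFm.imp φ ψ => FmSat S φ → FmSat S ψ
  | NFm.and φ ψ => FmSat S φ ∧ FmSat S ψ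
  | NFm.or φ ψ => FmSat S φ ∨ FmSat S ψ
  | NFm.all X σ φ => ∀ t : Tm L, IsTm t σ → FmSat S (φ.subst (substSingle X t))
  | NFm.ex X σ φ => ∃ t : Tm L, IsTm t σ ∧ FmSat S (φ.subst (substSingle X t))
  | NFm.nu a φ => ∀ b : L.Name, b.1 = a.1 → ¬ NFm.FNa b (NFm.nu a φ) →
      FmSat S (φ.swap b a)
termination_by φ => φ.size
decreasing_by all_goals (simp [NFm.size]; try omega)
/-! ### Herbrand models and the one-step deduction operator -/

/-- A Herbrand model of a set of (closed) program clauses: an equivariant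
subset of the Herbrand base satisfying every clause. -/
def IsHModel (Δ : Set (NCl L)) (H : Set (NAtom L)) : Prop :=
  H ⊆ BL L ∧ EquivariantSet H ∧ ∀ D ∈ Δ, ClSat H D

/-- The one-step deduction operator `T_D`. -/
def TOp : NCl L → Set (NAtom L) → Set (NAtom L)
  | NCl.tt, S => S
  | NCl.atom A, S => S ∪ {A}
  | NCl.and D D', S => TOp D S ∪ TOp D' S
  | NCl.imp G D, S => if GoalSat S G then TOp D S else S
  | NCl.all X σ D, S => ⋃ (t : Tm L) (_ : IsTm t σ), TOp (D.subst (substSingle X t)) S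
  | NCl.nu a D, S =>
      ⋃ (b : L.Name) (_ : b.1 = a.1 ∧ ¬ NCl.FNa b (NCl.nu a D)), TOp (D.swap a b) S
termination_by D _ => D.size
decreasing_by all_goals (simp [NCl.size]; try omega)

/-- The one-step deduction operator `T_Δ` of a (nonempty) program
`Δ = {D₁,…,Dₙ}`, i.e. `T_{D₁ ∧ ⋯ ∧ Dₙ}`. -/
def TProg (Δ : Set (NCl L)) (S : Set (NAtom L)) : Set (NAtom L) :=
  ⋃ D ∈ Δ, TOp D S

/-! ### Contexts, substitutions and constraint entailment -/

/-- Context bindings: variable bindings `X:σ` and name bindings `#a:ν`. -/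
inductive CtxBind (L : NomSig) : Type
  | v (X : ℕ) (σ : NomSort L.NSort L.DSort) : CtxBind L
  | n (a : L.Name) : CtxBind L

/-- Contexts, as lists of bindings with the *most recent binding first*. -/
abbrev Ctxx (L : NomSig) : Type := List (CtxBind L)

/-- The variables declared in a context. -/
def ctxVars : Ctxx L → Set ℕ
  | [] => ∅
  | CtxBind.v X _ :: Ξ => insert X (ctxVars Ξ)
  | CtxBind.n _ :: Ξ => ctxVars Ξ

/-- The names declared in a context. -/
def ctxNames : Ctxx L → Set L.Name
  | [] => ∅
  | CtxBind.v _ _ :: Ξ => ctxNames Ξ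
  | CtxBind.n a :: Ξ => insert a (ctxNames Ξ)

def CtxBind.key : CtxBind L → ℕ ⊕ L.Name
  | v X _ => Sum.inl X
  | n a => Sum.inr a

/-- All bindings of a context are distinct. -/
def CtxWF (Ξ : Ctxx L) : Prop := Ξ.Pairwise (fun b c => b.key ≠ c.key)

/-- `θ : Σ`: the ground substitution `θ` satisfies the context `Σ`. -/
def SubstOk : Ctxx L → (ℕ → Tm L) → Prop
  | [], _ => True
  | CtxBind.v X σ :: Ξ, θ => IsTm (θ X) σ ∧ SubstOk Ξ θ
  | CtxBind.n a :: Ξ, θ => (∀ X ∈ ctxVars Ξ, Fresh a (θ X)) ∧ SubstOk Ξ θ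

/-- `θ` satisfies every constraint in `∇`. -/
def SatAll (θ : ℕ → Tm L) (Φ : Finset (NCon L)) : Prop :=
  ∀ C ∈ Φ, ConSat (C.subst θ)

/-- Constraint entailment `Σ;∇ ⊨ C`. -/
def EntC (Ξ : Ctxx L) (Φ : Finset (NCon L)) (C : NCon L) : Prop :=
  ∀ θ : ℕ → Tm L, SubstOk Ξ θ → SatAll θ Φ → ConSat (C.subst θ)

/-- The free variables and names of a constraint are declared in `Σ`. -/
def ConDecl (Ξ : Ctxx L) (C : NCon L) : Prop :=
  (∀ X, NCon.FVa X C → X ∈ ctxVars Ξ) ∧ (∀ a, NCon.FNa a C → a ∈ ctxNames Ξ)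

/-- The free variables and names of a goal are declared in `Σ`. -/
def GoalDecl (Ξ : Ctxx L) (G : NGoal L) : Prop :=
  (∀ X, NGoal.FVa X G → X ∈ ctxVars Ξ) ∧ (∀ a, NGoal.FNa a G → a ∈ ctxNames Ξ)

/-- The free variables and names of a program clause are declared in `Σ`. -/
def ClDecl (Ξ : Ctxx L) (D : NCl L) : Prop :=
  (∀ X, NCl.FVa X D → X ∈ ctxVars Ξ) ∧ (∀ a, NCl.FNa a D → a ∈ ctxNames Ξ)

/-- The free variables and names of an atom are declared in `Σ`. -/
def AtomDecl (Ξ : Ctxx L) (A : NAtom L) : Prop :=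
  (∀ X, NAtom.FVa X A → X ∈ ctxVars Ξ) ∧ (∀ a, NAtom.FNa a A → a ∈ ctxNames Ξ)

/-! ### Uniform / focused proof search -/

mutual
/-- Uniform derivability `Σ;Δ;∇ ⟶ G`. -/
inductive UD (Δ : Set (NCl L)) : Ctxx L → Finset (NCon L) → NGoal L → Prop
  | top (Ξ : Ctxx L) (Φ : Finset (NCon L)) : UD Δ Ξ Φ NGoal.tt
  | con (Ξ : Ctxx L) (Φ : Finset (NCon L)) (C : NCon L) :
      EntC Ξ Φ C → UD Δ Ξ Φ (NGoal.con C)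
  | andR (Ξ : Ctxx L) (Φ : Finset (NCon L)) (G₁ G₂ : NGoal L) :
      UD Δ Ξ Φ G₁ → UD Δ Ξ Φ G₂ → UD Δ Ξ Φ (NGoal.and G₁ G₂)
  | orR₁ (Ξ : Ctxx L) (Φ : Finset (NCon L)) (G₁ G₂ : NGoal L) :
      UD Δ Ξ Φ G₁ → UD Δ Ξ Φ (NGoal.or G₁ G₂)
  | orR₂ (Ξ : Ctxx L) (Φ : Finset (NCon L)) (G₁ G₂ : NGoal L) :
      UD Δ Ξ Φ G₂ → UD Δ Ξ Φ (NGoal.or G₁ G₂)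
  | exR (Ξ : Ctxx L) (Φ : Finset (NCon L)) (X : ℕ) (σ : NomSort L.NSort L.DSort)
      (C : NCon L) (G : NGoal L) :
      EntC Ξ Φ (NCon.ex X σ C) → UD Δ (CtxBind.v X σ :: Ξ) (insert C Φ) G →
      UD Δ Ξ Φ (NGoal.ex X σ G)
  | nuR (Ξ : Ctxx L) (Φ : Finset (NCon L)) (a : L.Name) (C : NCon L) (G : NGoal L) :
      EntC Ξ Φ (NCon.nu a C) → UD Δ (CtxBind.n a :: Ξ) (insert C Φ) G →
      UD Δ Ξ Φ (NGoal.nu a G)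
  | sel (Ξ : Ctxx L) (Φ : Finset (NCon L)) (D : NCl L) (A : NAtom L) :
      D ∈ Δ → FD Δ Ξ Φ D A → UD Δ Ξ Φ (NGoal.atom A)

/-- Focused derivability `Σ;Δ;∇ ⟶ [D] ⇒ A`. -/
inductive FD (Δ : Set (NCl L)) : Ctxx L → Finset (NCon L) → NCl L → NAtom L → Prop
  | hyp (Ξ : Ctxx L) (Φ : Finset (NCon L)) (A' A : NAtom L) :
      EntC Ξ Φ (NCon.simA A' A) → FD Δ Ξ Φ (NCl.atom A') A
  | andL₁ (Ξ : Ctxx L) (Φ : Finset (NCon L)) (D₁ D₂ : NCl L) (A : NAtom L) :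
      FD Δ Ξ Φ D₁ A → FD Δ Ξ Φ (NCl.and D₁ D₂) A
  | andL₂ (Ξ : Ctxx L) (Φ : Finset (NCon L)) (D₁ D₂ : NCl L) (A : NAtom L) :
      FD Δ Ξ Φ D₂ A → FD Δ Ξ Φ (NCl.and D₁ D₂) A
  | impL (Ξ : Ctxx L) (Φ : Finset (NCon L)) (G : NGoal L) (D : NCl L) (A : NAtom L) :
      FD Δ Ξ Φ D A → UD Δ Ξ Φ G → FD Δ Ξ Φ (NCl.imp G D) A
  | allL (Ξ : Ctxx L) (Φ : Finset (NCon L)) (X : ℕ) (σ : NomSort L.NSort L.DSort)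
      (C : NCon L) (D : NCl L) (A : NAtom L) :
      EntC Ξ Φ (NCon.ex X σ C) → FD Δ (CtxBind.v X σ :: Ξ) (insert C Φ) D A →
      FD Δ Ξ Φ (NCl.all X σ D) A
  | nuL (Ξ : Ctxx L) (Φ : Finset (NCon L)) (a : L.Name) (C : NCon L) (D : NCl L)
      (A : NAtom L) :
      EntC Ξ Φ (NCon.nu a C) → FD Δ (CtxBind.n a :: Ξ) (insert C Φ) D A →
      FD Δ Ξ Φ (NCl.nu a D) A
end

mutual
/-- Uniform derivability for ≈-resolution, `Σ;Δ;∇ ⟶≈ G`. -/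
inductive UDe (Δ : Set (NCl L)) : Ctxx L → Finset (NCon L) → NGoal L → Prop
  | top (Ξ : Ctxx L) (Φ : Finset (NCon L)) : UDe Δ Ξ Φ NGoal.tt
  | con (Ξ : Ctxx L) (Φ : Finset (NCon L)) (C : NCon L) :
      EntC Ξ Φ C → UDe Δ Ξ Φ (NGoal.con C)
  | andR (Ξ : Ctxx L) (Φ : Finset (NCon L)) (G₁ G₂ : NGoal L) :
      UDe Δ Ξ Φ G₁ → UDe Δ Ξ Φ G₂ → UDe Δ Ξ Φ (NGoal.and G₁ G₂)
  | orR₁ (Ξ : Ctxx L) (Φ : Finset (NCon L)) (G₁ G₂ : NGoal L) :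
      UDe Δ Ξ Φ G₁ → UDe Δ Ξ Φ (NGoal.or G₁ G₂)
  | orR₂ (Ξ : Ctxx L) (Φ : Finset (NCon L)) (G₁ G₂ : NGoal L) :
      UDe Δ Ξ Φ G₂ → UDe Δ Ξ Φ (NGoal.or G₁ G₂)
  | exR (Ξ : Ctxx L) (Φ : Finset (NCon L)) (X : ℕ) (σ : NomSort L.NSort L.DSort)
      (C : NCon L) (G : NGoal L) :
      EntC Ξ Φ (NCon.ex X σ C) → UDe Δ (CtxBind.v X σ :: Ξ) (insert C Φ) G →
      UDe Δ Ξ Φ (NGoal.ex X σ G)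
  | nuR (Ξ : Ctxx L) (Φ : Finset (NCon L)) (a : L.Name) (C : NCon L) (G : NGoal L) :
      EntC Ξ Φ (NCon.nu a C) → UDe Δ (CtxBind.n a :: Ξ) (insert C Φ) G →
      UDe Δ Ξ Φ (NGoal.nu a G)
  | sel (Ξ : Ctxx L) (Φ : Finset (NCon L)) (D : NCl L) (A : NAtom L) :
      D ∈ Δ → FDe Δ Ξ Φ D A → UDe Δ Ξ Φ (NGoal.atom A)

/-- Focused derivability for ≈-resolution, `Σ;Δ;∇ ⟶≈ [D] ⇒ A`. -/
inductive FDe (Δ : Set (NCl L)) : Ctxx L → Finset (NCon L) → NCl L → NAtom L → Prop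
  | hyp (Ξ : Ctxx L) (Φ : Finset (NCon L)) (A' A : NAtom L) :
      EntC Ξ Φ (NCon.aeqA A' A) → FDe Δ Ξ Φ (NCl.atom A') A
  | andL₁ (Ξ : Ctxx L) (Φ : Finset (NCon L)) (D₁ D₂ : NCl L) (A : NAtom L) :
      FDe Δ Ξ Φ D₁ A → FDe Δ Ξ Φ (NCl.and D₁ D₂) A
  | andL₂ (Ξ : Ctxx L) (Φ : Finset (NCon L)) (D₁ D₂ : NCl L) (A : NAtom L) :
      FDe Δ Ξ Φ D₂ A → FDe Δ Ξ Φ (NCl.and D₁ D₂) A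
  | impL (Ξ : Ctxx L) (Φ : Finset (NCon L)) (G : NGoal L) (D : NCl L) (A : NAtom L) :
      FDe Δ Ξ Φ D A → UDe Δ Ξ Φ G → FDe Δ Ξ Φ (NCl.imp G D) A
  | allL (Ξ : Ctxx L) (Φ : Finset (NCon L)) (X : ℕ) (σ : NomSort L.NSort L.DSort)
      (C : NCon L) (D : NCl L) (A : NAtom L) :
      EntC Ξ Φ (NCon.ex X σ C) → FDe Δ (CtxBind.v X σ :: Ξ) (insert C Φ) D A →
      FDe Δ Ξ Φ (NCl.all X σ D) A
  | nuL (Ξ : Ctxx L) (Φ : Finset (NCon L)) (a : L.Name) (C : NCon L) (D : NCl L)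
      (A : NAtom L) :
      EntC Ξ Φ (NCon.nu a C) → FDe Δ (CtxBind.n a :: Ξ) (insert C Φ) D A →
      FDe Δ Ξ Φ (NCl.nu a D) A
end

/-! ### Residuated proof search -/

mutual
/-- Residuated uniform derivability `Σ;Δ ⟶ G ↘ C`. -/
inductive RG (Δ : Set (NCl L)) : Ctxx L → NGoal L → NCon L → Prop
  | con (Ξ : Ctxx L) (C : NCon L) : RG Δ Ξ (NGoal.con C) C
  | top (Ξ : Ctxx L) : RG Δ Ξ NGoal.tt NCon.tt
  | andR (Ξ : Ctxx L) (G₁ G₂ : NGoal L) (C₁ C₂ : NCon L) :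
      RG Δ Ξ G₁ C₁ → RG Δ Ξ G₂ C₂ → RG Δ Ξ (NGoal.and G₁ G₂) (NCon.and C₁ C₂)
  | orR₁ (Ξ : Ctxx L) (G₁ G₂ : NGoal L) (C : NCon L) :
      RG Δ Ξ G₁ C → RG Δ Ξ (NGoal.or G₁ G₂) C
  | orR₂ (Ξ : Ctxx L) (G₁ G₂ : NGoal L) (C : NCon L) :
      RG Δ Ξ G₂ C → RG Δ Ξ (NGoal.or G₁ G₂) C
  | exR (Ξ : Ctxx L) (X : ℕ) (σ : NomSort L.NSort L.DSort) (G : NGoal L) (C : NCon L) :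
      RG Δ (CtxBind.v X σ :: Ξ) G C → RG Δ Ξ (NGoal.ex X σ G) (NCon.ex X σ C)
  | nuR (Ξ : Ctxx L) (a : L.Name) (G : NGoal L) (C : NCon L) :
      RG Δ (CtxBind.n a :: Ξ) G C → RG Δ Ξ (NGoal.nu a G) (NCon.nu a C)
  | back (Ξ : Ctxx L) (A : NAtom L) (D : NCl L) (G : NGoal L) (C : NCon L) :
      D ∈ Δ → RF Δ Ξ D A G → RG Δ Ξ G C → RG Δ Ξ (NGoal.atom A) C

/-- Residuated focused derivability `Σ;Δ ⟶ [D] ⇒ A ↘ G`. -/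
inductive RF (Δ : Set (NCl L)) : Ctxx L → NCl L → NAtom L → NGoal L → Prop
  | hyp (Ξ : Ctxx L) (A' A : NAtom L) :
      RF Δ Ξ (NCl.atom A') A (NGoal.con (NCon.simA A A'))
  | andL₁ (Ξ : Ctxx L) (D₁ D₂ : NCl L) (A : NAtom L) (G : NGoal L) :
      RF Δ Ξ D₁ A G → RF Δ Ξ (NCl.and D₁ D₂) A G
  | andL₂ (Ξ : Ctxx L) (D₁ D₂ : NCl L) (A : NAtom L) (G : NGoal L) :
      RF Δ Ξ D₂ A G → RF Δ Ξ (NCl.and D₁ D₂) A G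
  | impL (Ξ : Ctxx L) (G : NGoal L) (D : NCl L) (A : NAtom L) (G' : NGoal L) :
      RF Δ Ξ D A G' → RF Δ Ξ (NCl.imp G D) A (NGoal.and G G')
  | allL (Ξ : Ctxx L) (X : ℕ) (σ : NomSort L.NSort L.DSort) (D : NCl L) (A : NAtom L)
      (G : NGoal L) :
      RF Δ (CtxBind.v X σ :: Ξ) D A G → RF Δ Ξ (NCl.all X σ D) A (NGoal.ex X σ G)
  | nuL (Ξ : Ctxx L) (a : L.Name) (D : NCl L) (A : NAtom L) (G : NGoal L) :
      RF Δ (CtxBind.n a :: Ξ) D A G → RF Δ Ξ (NCl.nu a D) A (NGoal.nu a G)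
end

/-! ### Operational semantics -/

/-- Operational states `⟨Σ; Γ; ∇⟩`. -/
structure OState (L : NomSig) : Type where
  ctx : Ctxx L
  goals : List (NGoal L)
  cons : Finset (NCon L)

/-- The operational transition relation relative to a program `Δ`. -/
inductive OStep (Δ : Set (NCl L)) : OState L → OState L → Prop
  | back (Ξ : Ctxx L) (Φ : Finset (NCon L)) (Γ : List (NGoal L)) (D : NCl L)
      (A : NAtom L) (G : NGoal L) :
      D ∈ Δ → RF Δ Ξ D A G →
      OStep Δ ⟨Ξ, NGoal.atom A :: Γ, Φ⟩ ⟨Ξ, G :: Γ, Φ⟩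
  | con (Ξ : Ctxx L) (Φ : Finset (NCon L)) (Γ : List (NGoal L)) (C : NCon L) :
      (∃ θ : ℕ → Tm L, SubstOk Ξ θ ∧ SatAll θ (insert C Φ)) →
      OStep Δ ⟨Ξ, NGoal.con C :: Γ, Φ⟩ ⟨Ξ, Γ, insert C Φ⟩
  | top (Ξ : Ctxx L) (Φ : Finset (NCon L)) (Γ : List (NGoal L)) :
      OStep Δ ⟨Ξ, NGoal.tt :: Γ, Φ⟩ ⟨Ξ, Γ, Φ⟩
  | and (Ξ : Ctxx L) (Φ : Finset (NCon L)) (Γ : List (NGoal L)) (G₁ G₂ : NGoal L) :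
      OStep Δ ⟨Ξ, NGoal.and G₁ G₂ :: Γ, Φ⟩ ⟨Ξ, G₁ :: G₂ :: Γ, Φ⟩
  | or₁ (Ξ : Ctxx L) (Φ : Finset (NCon L)) (Γ : List (NGoal L)) (G₁ G₂ : NGoal L) :
      OStep Δ ⟨Ξ, NGoal.or G₁ G₂ :: Γ, Φ⟩ ⟨Ξ, G₁ :: Γ, Φ⟩
  | or₂ (Ξ : Ctxx L) (Φ : Finset (NCon L)) (Γ : List (NGoal L)) (G₁ G₂ : NGoal L) :
      OStep Δ ⟨Ξ, NGoal.or G₁ G₂ :: Γ, Φ⟩ ⟨Ξ, G₂ :: Γ, Φ⟩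
  | ex (Ξ : Ctxx L) (Φ : Finset (NCon L)) (Γ : List (NGoal L)) (X : ℕ)
      (σ : NomSort L.NSort L.DSort) (G : NGoal L) :
      OStep Δ ⟨Ξ, NGoal.ex X σ G :: Γ, Φ⟩ ⟨CtxBind.v X σ :: Ξ, G :: Γ, Φ⟩
  | nu (Ξ : Ctxx L) (Φ : Finset (NCon L)) (Γ : List (NGoal L)) (a : L.Name)
      (G : NGoal L) :
      OStep Δ ⟨Ξ, NGoal.nu a G :: Γ, Φ⟩ ⟨CtxBind.n a :: Ξ, G :: Γ, Φ⟩

/-- `∃Σ[C]`: close a constraint by quantifying over all bindings of a context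
(innermost quantifier for the most recent binding). -/
def exCtx : Ctxx L → NCon L → NCon L
  | [], C => C
  | CtxBind.v X σ :: Ξ, C => exCtx Ξ (NCon.ex X σ C)
  | CtxBind.n a :: Ξ, C => exCtx Ξ (NCon.nu a C)

/-- The conjunction of a finite set of constraints. -/
def bigAnd (Φ : Finset (NCon L)) : NCon L := Φ.toList.foldr NCon.and NCon.tt

/-! ### Terms: renaming and substitution -/

/-- Structural induction on terms, with the hypothesis for every argument of a function symbol
(the recursor of the nested type `Tm` is inconvenient). -/
theorem Tm.ind {P : Tm L → Prop} (hvar : ∀ X, P (Tm.var X)) (hname : ∀ a, P (Tm.name a))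
    (happ : ∀ g ts, (∀ t ∈ ts, P t) → P (Tm.app g ts))
    (habs : ∀ a t, P t → P (Tm.abs a t)) : ∀ t, P t
  | Tm.var X => hvar X
  | Tm.name a => hname a
  | Tm.app g ts => happ g ts fun t ht => Tm.ind hvar hname happ habs t
  | Tm.abs a t => habs a t (Tm.ind hvar hname happ habs t)
termination_by t => sizeOf t
decreasing_by
  all_goals simp_wf
  all_goals first
    | (have := List.sizeOf_lt_of_mem ht; omega)
    | omega

theorem Tm.rename_var (f : L.Name → L.Name) (X : ℕ) : (Tm.var X).rename f = Tm.var X := by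
  rw [Tm.rename]

theorem Tm.rename_name (f : L.Name → L.Name) (a : L.Name) :
    (Tm.name a).rename f = Tm.name (f a) := by
  rw [Tm.rename]

theorem Tm.rename_app (f : L.Name → L.Name) (g : L.Func) (ts : List (Tm L)) :
    (Tm.app g ts).rename f = Tm.app g (ts.map (Tm.rename f)) := by
  rw [Tm.rename, List.attach_map_val (l := ts) (f := Tm.rename f)]

theorem Tm.rename_abs (f : L.Name → L.Name) (a : L.Name) (t : Tm L) :
    (Tm.abs a t).rename f = Tm.abs (f a) (t.rename f) := by
  rw [Tm.rename]

theorem Tm.subst_var (θ : ℕ → Tm L) (X : ℕ) : (Tm.var X).subst θ = θ X := by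
  rw [Tm.subst]

theorem Tm.subst_name (θ : ℕ → Tm L) (a : L.Name) : (Tm.name a).subst θ = Tm.name a := by
  rw [Tm.subst]

theorem Tm.subst_app (θ : ℕ → Tm L) (g : L.Func) (ts : List (Tm L)) :
    (Tm.app g ts).subst θ = Tm.app g (ts.map (Tm.subst θ)) := by
  rw [Tm.subst, List.attach_map_val (l := ts) (f := Tm.subst θ)]

theorem Tm.subst_abs (θ : ℕ → Tm L) (a : L.Name) (t : Tm L) :
    (Tm.abs a t).subst θ = Tm.abs a (t.subst θ) := by
  rw [Tm.subst]

theorem Tm.rename_rename (f g : L.Name → L.Name) (t : Tm L) :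
    (t.rename f).rename g = t.rename (g ∘ f) := by
  induction t using Tm.ind with
  | hvar X => simp only [Tm.rename_var]
  | hname a => simp only [Tm.rename_name, Function.comp]
  | happ h ts ih =>
    simp only [Tm.rename_app, List.map_map]
    exact congrArg _ (List.map_congr_left ih)
  | habs a t ih => simp only [Tm.rename_abs, ih, Function.comp]

theorem Tm.rename_subst (f : L.Name → L.Name) (θ : ℕ → Tm L) (t : Tm L) :
    (t.subst θ).rename f = (t.rename f).subst (fun X => (θ X).rename f) := by
  induction t using Tm.ind with
  | hvar X => simp only [Tm.rename_var, Tm.subst_var]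
  | hname a => simp only [Tm.rename_name, Tm.subst_name]
  | happ h ts ih =>
    simp only [Tm.rename_app, Tm.subst_app, List.map_map]
    exact congrArg _ (List.map_congr_left ih)
  | habs a t ih => simp only [Tm.rename_abs, Tm.subst_abs, ih]

theorem Tm.subst_subst (θ η : ℕ → Tm L) (t : Tm L) :
    (t.subst θ).subst η = t.subst (fun X => (θ X).subst η) := by
  induction t using Tm.ind with
  | hvar X => simp only [Tm.subst_var]
  | hname a => simp only [Tm.subst_name]
  | happ h ts ih =>
    simp only [Tm.subst_app, List.map_map]
    exact congrArg _ (List.map_congr_left ih)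
  | habs a t ih => simp only [Tm.subst_abs, ih]

theorem Tm.subst_id (t : Tm L) : t.subst Tm.var = t := by
  induction t using Tm.ind with
  | hvar X => simp only [Tm.subst_var]
  | hname a => simp only [Tm.subst_name]
  | happ h ts ih =>
    rw [Tm.subst_app, List.map_congr_left ih, List.map_id']
  | habs a t ih => simp only [Tm.subst_abs, ih]

/-- Renaming names does not touch variables, so it reflects invariance under a substitution. -/
theorem Tm.subst_eq_of_rename (f : L.Name → L.Name) (θ : ℕ → Tm L) (t : Tm L) :
    (t.rename f).subst θ = t.rename f → t.subst θ = t := by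
  induction t using Tm.ind with
  | hvar X => simp only [Tm.rename_var, imp_self]
  | hname a => simp only [Tm.subst_name, implies_true]
  | happ h ts ih =>
    simp only [Tm.rename_app, Tm.subst_app, Tm.app.injEq, true_and, List.map_map]
    intro H
    rw [List.map_inj_left] at H
    rw [List.map_congr_left fun t ht => ih t ht (H t ht), List.map_id']
  | habs a t ih =>
    simp only [Tm.rename_abs, Tm.subst_abs, Tm.abs.injEq, true_and]
    exact ih

theorem map_eq_self_of_zip {α β : Type} (f : α → α) :
    ∀ (l : List α) (m : List β), l.length = m.length → (∀ p ∈ l.zip m, f p.1 = p.1) →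
      l.map f = l
  | [], _, _, _ => rfl
  | a :: l, [], h, _ => by simp at h
  | a :: l, b :: m, h, H => by
    simp only [List.length_cons, Nat.add_right_cancel_iff] at h
    simp only [List.zip_cons_cons, List.mem_cons, forall_eq_or_imp] at H
    rw [List.map_cons, H.1, map_eq_self_of_zip f l m h H.2]

theorem map_eq_self_of_zip_right {α β : Type} (f : β → β) :
    ∀ (l : List α) (m : List β), l.length = m.length → (∀ p ∈ l.zip m, f p.2 = p.2) →
      m.map f = m
  | _, [], _, _ => rfl
  | [], b :: m, h, _ => by simp at h
  | a :: l, b :: m, h, H => by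
    simp only [List.length_cons, Nat.add_right_cancel_iff] at h
    simp only [List.zip_cons_cons, List.mem_cons, forall_eq_or_imp] at H
    rw [List.map_cons, H.1, map_eq_self_of_zip_right f l m h H.2]

theorem IsTm.subst_eq {t : Tm L} {σ : NomSort L.NSort L.DSort} (h : IsTm t σ) (θ : ℕ → Tm L) :
    t.subst θ = t := by
  induction h with
  | name a => rw [Tm.subst_name]
  | app f ts hl _ ih => rw [Tm.subst_app, map_eq_self_of_zip _ _ _ hl ih]
  | abs a t σ _ ih => rw [Tm.subst_abs, ih]

/-- Terms related by `Aeq` contain no variables: `Aeq` has no rule for them. -/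
theorem Aeq.subst_eq {t u : Tm L} (h : Aeq t u) (θ : ℕ → Tm L) :
    t.subst θ = t ∧ u.subst θ = u := by
  induction h with
  | name a => simp only [Tm.subst_name, and_self]
  | app f ts us hl _ ih =>
    rw [Tm.subst_app, Tm.subst_app, map_eq_self_of_zip _ _ _ hl fun p hp => (ih p hp).1,
      map_eq_self_of_zip_right _ _ _ hl fun p hp => (ih p hp).2]
    exact ⟨rfl, rfl⟩
  | absSame a t u _ ih => rw [Tm.subst_abs, Tm.subst_abs, ih.1, ih.2]; exact ⟨rfl, rfl⟩
  | absDiff a b t u _ _ ih =>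
    rw [Tm.subst_abs, Tm.subst_abs, ih.1, Tm.subst_eq_of_rename _ _ _ ih.2]
    exact ⟨rfl, rfl⟩

theorem AtomAeq.subst_eq {A B : NAtom L} (h : AtomAeq A B) (θ : ℕ → Tm L) :
    A.subst θ = A ∧ B.subst θ = B := by
  obtain ⟨_, hl, H⟩ := h
  constructor
  · rw [NAtom.subst, map_eq_self_of_zip _ _ _ hl fun p hp => ((H p hp).subst_eq θ).1]
  · rw [NAtom.subst, map_eq_self_of_zip_right _ _ _ hl fun p hp => ((H p hp).subst_eq θ).2]

theorem Fresh.subst {a : L.Name} {t : Tm L} (h : Fresh a t) (θ : ℕ → Tm L) :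
    Fresh a (t.subst θ) := by
  induction h with
  | name b hab => rw [Tm.subst_name]; exact .name _ _ hab
  | app f ts _ ih =>
    rw [Tm.subst_app]
    refine .app _ _ _ fun t ht => ?_
    obtain ⟨u, hu, rfl⟩ := List.mem_map.1 ht
    exact ih u hu
  | absSame t => rw [Tm.subst_abs]; exact .absSame _ _
  | absDiff b t hab _ ih => rw [Tm.subst_abs]; exact .absDiff _ _ _ hab ih

theorem Tm.FNa.subst {a : L.Name} {t : Tm L} (h : Tm.FNa a t) (θ : ℕ → Tm L) :
    Tm.FNa a (t.subst θ) := by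
  induction h with
  | name => rw [Tm.subst_name]; exact .name _
  | app f ts t ht _ ih =>
    rw [Tm.subst_app]; exact .app _ _ _ _ (List.mem_map_of_mem ht) ih
  | abs b t hab _ ih => rw [Tm.subst_abs]; exact .abs _ _ _ hab ih

/-! ### Equivariance for terms and atoms -/

theorem comp_swapName {f : L.Name → L.Name} (hf : Function.Injective f) (a b : L.Name) :
    f ∘ swapName a b = swapName (f a) (f b) ∘ f := by
  funext c
  simp only [Function.comp, swapName, hf.eq_iff]
  split_ifs <;> rfl

theorem Tm.swap_rename {f : L.Name → L.Name} (hf : Function.Injective f) (a b : L.Name)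
    (t : Tm L) : (t.swap a b).rename f = (t.rename f).swap (f a) (f b) := by
  rw [Tm.swap, Tm.swap, Tm.rename_rename, Tm.rename_rename, comp_swapName hf]

theorem Fresh.rename {f : L.Name → L.Name} (hf : Function.Injective f) {a : L.Name} {t : Tm L}
    (h : Fresh a t) : Fresh (f a) (t.rename f) := by
  induction h with
  | name b hab => rw [Tm.rename_name]; exact .name _ _ (hf.ne hab)
  | app g ts _ ih =>
    rw [Tm.rename_app]
    refine .app _ _ _ fun t ht => ?_
    obtain ⟨u, hu, rfl⟩ := List.mem_map.1 ht
    exact ih u hu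
  | absSame t => rw [Tm.rename_abs]; exact .absSame _ _
  | absDiff b t hab _ ih => rw [Tm.rename_abs]; exact .absDiff _ _ _ (hf.ne hab) ih

theorem Tm.FNa.rename {f : L.Name → L.Name} (hf : Function.Injective f) {a : L.Name} {t : Tm L}
    (h : Tm.FNa a t) : Tm.FNa (f a) (t.rename f) := by
  induction h with
  | name => rw [Tm.rename_name]; exact .name _
  | app g ts t ht _ ih =>
    rw [Tm.rename_app]; exact .app _ _ _ _ (List.mem_map_of_mem ht) ih
  | abs b t hab _ ih => rw [Tm.rename_abs]; exact .abs _ _ _ (hf.ne hab) ih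

theorem forall_zip_map {α β γ δ : Type} {f : α → γ} {g : β → δ} {P : γ → δ → Prop}
    {l : List α} {m : List β} (H : ∀ p ∈ l.zip m, P (f p.1) (g p.2)) :
    ∀ p ∈ (l.map f).zip (m.map g), P p.1 p.2 := by
  intro p hp
  rw [List.zip_map] at hp
  obtain ⟨q, hq, rfl⟩ := List.mem_map.1 hp
  exact H q hq

theorem Aeq.rename {f : L.Name → L.Name} (hf : Function.Injective f) {t u : Tm L}
    (h : Aeq t u) : Aeq (t.rename f) (u.rename f) := by
  induction h with
  | name a => rw [Tm.rename_name]; exact .name _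
  | app g ts us hl _ ih =>
    rw [Tm.rename_app, Tm.rename_app]
    exact .app _ _ _ (by simpa using hl) (forall_zip_map ih)
  | absSame a t u _ ih => rw [Tm.rename_abs, Tm.rename_abs]; exact .absSame _ _ _ ih
  | absDiff a b t u hfr _ ih =>
    rw [Tm.rename_abs, Tm.rename_abs]
    rw [Tm.swap_rename hf] at ih
    exact .absDiff _ _ _ _ (hfr.rename hf) ih

theorem IsTm.rename {f : L.Name → L.Name} (hf : ∀ a, (f a).1 = a.1) {t : Tm L}
    {σ : NomSort L.NSort L.DSort} (h : IsTm t σ) : IsTm (t.rename f) σ := by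
  induction h with
  | name a => rw [Tm.rename_name, ← hf a]; exact .name _
  | app g ts hl _ ih =>
    rw [Tm.rename_app]
    refine .app _ _ (by simpa using hl) ?_
    have := forall_zip_map (f := Tm.rename f) (g := id) (P := IsTm) ih
    rwa [List.map_id] at this
  | abs a t σ _ ih => rw [Tm.rename_abs, ← hf a]; exact .abs _ _ _ ih

theorem NAtom.rename_rename (f g : L.Name → L.Name) (A : NAtom L) :
    (A.rename f).rename g = A.rename (g ∘ f) := by
  simp only [NAtom.rename, List.map_map, NAtom.mk.injEq, true_and]
  exact List.map_congr_left fun t _ => Tm.rename_rename f g t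

theorem NAtom.rename_subst (f : L.Name → L.Name) (θ : ℕ → Tm L) (A : NAtom L) :
    (A.subst θ).rename f = (A.rename f).subst (fun X => (θ X).rename f) := by
  simp only [NAtom.rename, NAtom.subst, List.map_map, NAtom.mk.injEq, true_and]
  exact List.map_congr_left fun t _ => Tm.rename_subst f θ t

theorem NAtom.subst_subst (θ η : ℕ → Tm L) (A : NAtom L) :
    (A.subst θ).subst η = A.subst (fun X => (θ X).subst η) := by
  simp only [NAtom.subst, List.map_map, NAtom.mk.injEq, true_and]
  exact List.map_congr_left fun t _ => Tm.subst_subst θ η t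

theorem NAtom.subst_id (A : NAtom L) : A.subst Tm.var = A := by
  rw [NAtom.subst, List.map_congr_left fun t _ => Tm.subst_id t, List.map_id']

theorem NAtom.subst_eq_of_rename (f : L.Name → L.Name) (θ : ℕ → Tm L) (A : NAtom L)
    (h : (A.rename f).subst θ = A.rename f) : A.subst θ = A := by
  simp only [NAtom.rename, NAtom.subst, NAtom.mk.injEq, true_and, List.map_map,
    List.map_inj_left] at h
  rw [NAtom.subst, List.map_congr_left fun t ht => Tm.subst_eq_of_rename f θ t (h t ht),
    List.map_id']

theorem NAtom.FNa.subst {a : L.Name} {A : NAtom L} (h : NAtom.FNa a A) (θ : ℕ → Tm L) :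
    NAtom.FNa a (A.subst θ) := by
  obtain ⟨t, ht, h⟩ := h
  exact ⟨_, List.mem_map_of_mem ht, h.subst θ⟩

theorem NAtom.FNa.rename {f : L.Name → L.Name} (hf : Function.Injective f) {a : L.Name}
    {A : NAtom L} (h : NAtom.FNa a A) : NAtom.FNa (f a) (A.rename f) := by
  obtain ⟨t, ht, h⟩ := h
  exact ⟨_, List.mem_map_of_mem ht, h.rename hf⟩

theorem AtomAeq.rename {f : L.Name → L.Name} (hf : Function.Injective f) {A B : NAtom L}
    (h : AtomAeq A B) : AtomAeq (A.rename f) (B.rename f) := by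
  obtain ⟨hr, hl, H⟩ := h
  exact ⟨hr, by simpa [NAtom.rename] using hl,
    forall_zip_map fun p hp => (H p hp).rename hf⟩

theorem IsPerm.comp {f g : L.Name → L.Name} (hf : IsPerm f) (hg : IsPerm g) :
    IsPerm (f ∘ g) := by
  refine ⟨hf.1.comp hg.1, fun a => (hf.2.1 _).trans (hg.2.1 a), ?_⟩
  refine (hf.2.2.union hg.2.2).subset fun a ha => ?_
  by_contra hn
  simp only [Set.mem_union, Set.mem_ofPred_eq, not_or, not_not] at hn
  exact ha (by rw [Function.comp, hn.2, hn.1])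

theorem swapName_involutive (a b : L.Name) : Function.Involutive (swapName a b) := by
  intro c
  simp only [swapName]
  split_ifs <;> simp_all

theorem isPerm_swapName {a b : L.Name} (h : a.1 = b.1) : IsPerm (swapName a b) := by
  refine ⟨(swapName_involutive a b).bijective, fun c => ?_, ?_⟩
  · simp only [swapName]
    split_ifs with h1 h2
    · rw [h1, h]
    · rw [h2, h]
    · rfl
  · refine (Set.toFinite {a, b}).subset fun c hc => ?_
    by_contra hn
    simp only [Set.mem_insert_iff, Set.mem_singleton_iff, not_or] at hn
    exact hc (by simp only [swapName, if_neg hn.1, if_neg hn.2])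

theorem SimTm.rename {f : L.Name → L.Name} (hf : IsPerm f) (hi : Function.Involutive f)
    {t u : Tm L} (h : SimTm t u) : SimTm (t.rename f) (u.rename f) := by
  obtain ⟨π, hπ, h⟩ := h
  -- The conjugate of `π` by the involution `f`.
  refine ⟨f ∘ π ∘ f, hf.comp (hπ.comp hf), ?_⟩
  have h' := h.rename hf.1.1
  rw [Tm.rename_rename] at h' ⊢
  rwa [Function.comp_assoc, Function.comp_assoc, hi.comp_self, Function.comp_id]

theorem AtomSim.rename {f : L.Name → L.Name} (hf : IsPerm f) (hi : Function.Involutive f)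
    {A B : NAtom L} (h : AtomSim A B) : AtomSim (A.rename f) (B.rename f) := by
  obtain ⟨π, hπ, h⟩ := h
  refine ⟨f ∘ π ∘ f, hf.comp (hπ.comp hf), ?_⟩
  have h' := h.rename hf.1.1
  rw [NAtom.rename_rename] at h' ⊢
  rwa [Function.comp_assoc, Function.comp_assoc, hi.comp_self, Function.comp_id]

/-! ### Constraints: renaming and substitution -/

theorem NCon.rename_rename (f g : L.Name → L.Name) (C : NCon L) :
    (C.rename f).rename g = C.rename (g ∘ f) := by
  induction C <;> simp_all [NCon.rename, Tm.rename_rename, NAtom.rename_rename]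

theorem NCon.swap_rename {f : L.Name → L.Name} (hf : Function.Injective f) (a b : L.Name)
    (C : NCon L) : (C.swap a b).rename f = (C.rename f).swap (f a) (f b) := by
  rw [NCon.swap, NCon.swap, NCon.rename_rename, NCon.rename_rename, comp_swapName hf]

theorem NCon.rename_subst (f : L.Name → L.Name) (C : NCon L) : ∀ θ : ℕ → Tm L,
    (C.subst θ).rename f = (C.rename f).subst (fun X => (θ X).rename f) := by
  induction C with
  | ex X σ C ih =>
    intro θ
    simp only [NCon.rename, NCon.subst, ih]
    congr 2
    funext Y
    by_cases hY : Y = X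
    · subst hY; simp [Tm.rename_var]
    · simp [hY]
  | _ => intro θ; simp_all [NCon.rename, NCon.subst, Tm.rename_subst, NAtom.rename_subst]

theorem NCon.subst_id (C : NCon L) : C.subst Tm.var = C := by
  induction C <;> simp_all [NCon.subst, Tm.subst_id, NAtom.subst_id, Function.update_eq_self]

theorem NCon.FNa.rename {f : L.Name → L.Name} (hf : Function.Injective f) {a : L.Name}
    {C : NCon L} (h : NCon.FNa a C) : NCon.FNa (f a) (C.rename f) := by
  induction h with
  | eq₁ t u h => exact .eq₁ _ _ _ (h.rename hf)
  | eq₂ t u h => exact .eq₂ _ _ _ (h.rename hf)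
  | frN t => exact .frN _ _
  | frT c t h => exact .frT _ _ _ (h.rename hf)
  | sim₁ t u h => exact .sim₁ _ _ _ (h.rename hf)
  | sim₂ t u h => exact .sim₂ _ _ _ (h.rename hf)
  | simA₁ A B h => exact .simA₁ _ _ _ (h.rename hf)
  | simA₂ A B h => exact .simA₂ _ _ _ (h.rename hf)
  | aeqA₁ A B h => exact .aeqA₁ _ _ _ (h.rename hf)
  | aeqA₂ A B h => exact .aeqA₂ _ _ _ (h.rename hf)
  | and₁ C C' _ ih => exact .and₁ _ _ _ ih
  | and₂ C C' _ ih => exact .and₂ _ _ _ ih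
  | ex X σ C _ ih => exact .ex _ _ _ _ ih
  | nu c C hac _ ih => exact .nu _ _ _ (hf.ne hac) ih

theorem NCon.FNa.subst {a : L.Name} {C : NCon L} (h : NCon.FNa a C) :
    ∀ θ : ℕ → Tm L, NCon.FNa a (C.subst θ) := by
  induction h with
  | eq₁ t u h => exact fun θ => .eq₁ _ _ _ (h.subst θ)
  | eq₂ t u h => exact fun θ => .eq₂ _ _ _ (h.subst θ)
  | frN t => exact fun θ => .frN _ _
  | frT c t h => exact fun θ => .frT _ _ _ (h.subst θ)
  | sim₁ t u h => exact fun θ => .sim₁ _ _ _ (h.subst θ)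
  | sim₂ t u h => exact fun θ => .sim₂ _ _ _ (h.subst θ)
  | simA₁ A B h => exact fun θ => .simA₁ _ _ _ (h.subst θ)
  | simA₂ A B h => exact fun θ => .simA₂ _ _ _ (h.subst θ)
  | aeqA₁ A B h => exact fun θ => .aeqA₁ _ _ _ (h.subst θ)
  | aeqA₂ A B h => exact fun θ => .aeqA₂ _ _ _ (h.subst θ)
  | and₁ C C' _ ih => exact fun θ => .and₁ _ _ _ (ih θ)
  | and₂ C C' _ ih => exact fun θ => .and₂ _ _ _ (ih θ)
  | ex X σ C _ ih => exact fun θ => .ex _ _ _ _ (ih _)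
  | nu c C hac _ ih => exact fun θ => .nu _ _ _ hac (ih θ)

theorem rename_substSingle (f : L.Name → L.Name) (X : ℕ) (t : Tm L) :
    (fun Y => (substSingle X t Y).rename f) = substSingle X (t.rename f) := by
  funext Y
  simp only [substSingle]
  split_ifs
  · rfl
  · exact Tm.rename_var f Y

theorem update_substSingle_self (X : ℕ) (t : Tm L) :
    Function.update (substSingle X t) X (Tm.var X) = Tm.var := by
  funext Y
  by_cases hY : Y = X
  · subst hY; simp
  · simp [hY, substSingle]

theorem update_substSingle_of_ne {X Z : ℕ} (h : Z ≠ X) (t : Tm L) :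
    Function.update (substSingle X t) Z (Tm.var Z) = substSingle X t :=
  Function.update_eq_self_iff.2 (by simp [substSingle, h])

/-- Substitutions of ground terms for distinct variables commute. -/
theorem NCon.substSingle_comm {X Z : ℕ} (hXZ : X ≠ Z) {s t : Tm L}
    (hs : ∀ θ, s.subst θ = s) (ht : ∀ θ, t.subst θ = t) (C : NCon L) :
    (C.subst (substSingle X s)).subst (substSingle Z t) =
      (C.subst (substSingle Z t)).subst (substSingle X s) := by
  have key : (fun Y => (substSingle X s Y).subst (substSingle Z t)) =
      fun Y => (substSingle Z t Y).subst (substSingle X s) := by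
    funext Y
    by_cases h1 : Y = X
    · subst h1; simp [substSingle, hXZ, Tm.subst_var, hs]
    · by_cases h2 : Y = Z
      · subst h2; simp [substSingle, Tm.subst_var, ht, h1]
      · simp [substSingle, Tm.subst_var, h1, h2]
  induction C with
  | ex W σ C ih =>
    simp only [NCon.subst]
    by_cases h1 : W = X
    · subst h1
      rw [update_substSingle_self, NCon.subst_id, update_substSingle_of_ne hXZ, NCon.subst_id]
    · rw [update_substSingle_of_ne h1]
      by_cases h2 : W = Z
      · subst h2
        rw [update_substSingle_self, NCon.subst_id, NCon.subst_id]
      · rw [update_substSingle_of_ne h2, ih]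
  | _ => simp_all [NCon.subst, Tm.subst_subst, NAtom.subst_subst]

/-- Delaying the ground value `θ X`. The other values of `θ` may be open; both sides then
perform the same captures. -/
theorem NCon.subst_update_substSingle {X : ℕ} {g : Tm L} (hg : ∀ η, g.subst η = g)
    (C : NCon L) : ∀ θ : ℕ → Tm L, θ X = g →
    (C.subst (Function.update θ X (Tm.var X))).subst (substSingle X g) =
      (C.subst θ).subst (substSingle X g) := by
  have key : ∀ θ : ℕ → Tm L, θ X = g →
      (fun Y => (Function.update θ X (Tm.var X) Y).subst (substSingle X g)) =
      fun Y => (θ Y).subst (substSingle X g) := by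
    intro θ h
    funext Y
    by_cases h1 : Y = X
    · subst h1; simp [substSingle, Tm.subst_var, hg, h]
    · simp [h1]
  induction C with
  | ex W σ C ih =>
    intro θ hθ
    simp only [NCon.subst]
    by_cases h1 : W = X
    · subst h1; rw [Function.update_idem]
    · rw [Function.update_comm (Ne.symm h1), update_substSingle_of_ne h1, ih]
      simp [Ne.symm h1, hθ]
  | _ => intro θ hθ; simp_all [NCon.subst, Tm.subst_subst, NAtom.subst_subst]

/-! ### Satisfaction of constraints -/

/-- Satisfaction is equivariant; it suffices to treat involutive permutations, such as swappings. -/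
theorem ConSat.rename {f : L.Name → L.Name} (hf : IsPerm f) (hi : Function.Involutive f)
    (C : NCon L) (h : ConSat C) : ConSat (C.rename f) := by
  induction hn : C.size using Nat.strong_induction_on generalizing C with
  | _ n IH =>
  subst hn
  cases C with
  | tt => simp only [NCon.rename, ConSat]
  | eq t u => simp only [NCon.rename, ConSat] at h ⊢; exact h.rename hf.1.1
  | fr a t => simp only [NCon.rename, ConSat] at h ⊢; exact h.rename hf.1.1
  | sim t u => simp only [NCon.rename, ConSat] at h ⊢; exact h.rename hf hi
  | simA A B => simp only [NCon.rename, ConSat] at h ⊢; exact h.rename hf hi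
  | aeqA A B => simp only [NCon.rename, ConSat] at h ⊢; exact h.rename hf.1.1
  | and C C' =>
    simp only [NCon.rename, ConSat] at h ⊢
    exact ⟨IH _ (by simp only [NCon.size]; omega) C h.1 rfl,
      IH _ (by simp only [NCon.size]; omega) C' h.2 rfl⟩
  | ex X σ C =>
    simp only [NCon.rename, ConSat] at h ⊢
    obtain ⟨t, ht, h⟩ := h
    refine ⟨t.rename f, ht.rename hf.2.1, ?_⟩
    have := IH _ (by simp [NCon.size]) _ h rfl
    rwa [NCon.rename_subst, rename_substSingle] at this
  | nu a C =>
    simp only [NCon.rename, ConSat] at h ⊢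
    intro b hb hfr
    have h1 := h (f b) (by rw [hf.2.1, hb, hf.2.1]) fun H => hfr (by
      have := H.rename hf.1.1
      rwa [hi b] at this)
    have h2 := IH _ (by simp [NCon.size]) _ h1 rfl
    rwa [NCon.swap_rename hf.1.1, hi b] at h2

/-- Satisfaction of an open constraint is preserved by instantiating a variable with a ground
term: open terms satisfy none of the equations, and freshness survives instantiation. -/
theorem ConSat.substSingle (X : ℕ) (σ : NomSort L.NSort L.DSort) (C : NCon L) (g : Tm L)
    (hg : IsTm g σ) (h : ConSat C) : ConSat (C.subst (substSingle X g)) := by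
  induction hn : C.size using Nat.strong_induction_on generalizing C g with
  | _ n IH =>
  subst hn
  cases C with
  | tt => simp only [NCon.subst, ConSat]
  | eq t u =>
    simp only [NCon.subst, ConSat] at h ⊢
    rwa [(h.subst_eq _).1, (h.subst_eq _).2]
  | fr a t => simp only [NCon.subst, ConSat] at h ⊢; exact h.subst _
  | sim t u =>
    simp only [NCon.subst, ConSat] at h ⊢
    obtain ⟨π, -, hA⟩ := id h
    rwa [Tm.subst_eq_of_rename _ _ _ (hA.subst_eq _).1, (hA.subst_eq _).2]
  | simA A B =>
    simp only [NCon.subst, ConSat] at h ⊢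
    obtain ⟨π, -, hA⟩ := id h
    rwa [NAtom.subst_eq_of_rename _ _ _ (hA.subst_eq _).1, (hA.subst_eq _).2]
  | aeqA A B =>
    simp only [NCon.subst, ConSat] at h ⊢
    rwa [(h.subst_eq _).1, (h.subst_eq _).2]
  | and C C' =>
    simp only [NCon.subst, ConSat] at h ⊢
    exact ⟨IH _ (by simp only [NCon.size]; omega) C g hg h.1 rfl,
      IH _ (by simp only [NCon.size]; omega) C' g hg h.2 rfl⟩
  | ex Z τ C =>
    by_cases hZ : Z = X
    · subst hZ
      rwa [NCon.subst, update_substSingle_self, NCon.subst_id]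
    · rw [NCon.subst, update_substSingle_of_ne hZ]
      simp only [ConSat] at h ⊢
      obtain ⟨t, ht, h⟩ := h
      refine ⟨t, ht, ?_⟩
      rw [NCon.substSingle_comm (Ne.symm hZ) hg.subst_eq ht.subst_eq]
      exact IH _ (by simp [NCon.size]) _ g hg h rfl
  | nu a C =>
    simp only [NCon.subst, ConSat] at h ⊢
    intro b hb hfr
    have h1 := h b hb fun H => hfr (H.subst _)
    -- Swapping acts on the instantiating term as well, so the induction hypothesis is used
    -- at the swapped term.
    have h2 := IH _ (by simp [NCon.size]) _ (g.swap b a)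
      (hg.rename (isPerm_swapName hb).2.1) h1 rfl
    rwa [NCon.swap, NCon.rename_subst, rename_substSingle]

/-- The value `θ X` is a witness for `∃X`. -/
theorem ConSat.ex_intro {X : ℕ} {σ : NomSort L.NSort L.DSort} {C : NCon L} {θ : ℕ → Tm L}
    (hθ : IsTm (θ X) σ) (h : ConSat (C.subst θ)) : ConSat ((NCon.ex X σ C).subst θ) := by
  simp only [NCon.subst, ConSat]
  refine ⟨θ X, hθ, ?_⟩
  rw [NCon.subst_update_substSingle hθ.subst_eq C θ rfl]
  exact ConSat.substSingle X σ _ _ hθ h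

theorem ConSat.nu_intro {a : L.Name} {C : NCon L} {θ : ℕ → Tm L}
    (h : ConSat (C.subst θ)) : ConSat ((NCon.nu a C).subst θ) := by
  simp only [NCon.subst, ConSat]
  exact fun b hb _ => ConSat.rename (isPerm_swapName hb) (swapName_involutive b a) _ h

/-! ### Residuated derivations do not depend on the context -/

theorem RF.ctx {Δ : Set (NCl L)} : ∀ {Ξ : Ctxx L} {D : NCl L} {A : NAtom L} {G : NGoal L},
    RF Δ Ξ D A G → ∀ Ξ₁ : Ctxx L, RF Δ Ξ₁ D A G
  | _, _, _, _, .hyp _ A' A, Ξ₁ => .hyp Ξ₁ A' A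
  | _, _, _, _, .andL₁ _ _ _ _ _ h, Ξ₁ => .andL₁ _ _ _ _ _ (h.ctx Ξ₁)
  | _, _, _, _, .andL₂ _ _ _ _ _ h, Ξ₁ => .andL₂ _ _ _ _ _ (h.ctx Ξ₁)
  | _, _, _, _, .impL _ _ _ _ _ h, Ξ₁ => .impL _ _ _ _ _ (h.ctx Ξ₁)
  | _, _, _, _, .allL _ _ _ _ _ _ h, Ξ₁ => .allL _ _ _ _ _ _ (h.ctx _)
  | _, _, _, _, .nuL _ _ _ _ _ h, Ξ₁ => .nuL _ _ _ _ _ (h.ctx _)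

theorem RG.ctx {Δ : Set (NCl L)} : ∀ {Ξ : Ctxx L} {G : NGoal L} {C : NCon L},
    RG Δ Ξ G C → ∀ Ξ₁ : Ctxx L, RG Δ Ξ₁ G C
  | _, _, _, .con _ C, Ξ₁ => .con Ξ₁ C
  | _, _, _, .top _, Ξ₁ => .top Ξ₁
  | _, _, _, .andR _ _ _ _ _ h h', Ξ₁ => .andR _ _ _ _ _ (h.ctx Ξ₁) (h'.ctx Ξ₁)
  | _, _, _, .orR₁ _ _ _ _ h, Ξ₁ => .orR₁ _ _ _ _ (h.ctx Ξ₁)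
  | _, _, _, .orR₂ _ _ _ _ h, Ξ₁ => .orR₂ _ _ _ _ (h.ctx Ξ₁)
  | _, _, _, .exR _ _ _ _ _ h, Ξ₁ => .exR _ _ _ _ _ (h.ctx _)
  | _, _, _, .nuR _ _ _ _ h, Ξ₁ => .nuR _ _ _ _ (h.ctx _)
  | _, _, _, .back _ _ _ _ _ hD hF h, Ξ₁ => .back _ _ _ _ _ hD (hF.ctx Ξ₁) (h.ctx Ξ₁)

/-! **Statement 15.**  Transition soundness of the operational semantics. -/
theorem stmt15 (L : NomSig)
    (hinhab : ∀ σ : NomSort L.NSort L.DSort, ∃ t : Tm L, IsTm t σ)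
    (Δ : Set (NCl L)) (hfin : Δ.Finite) (hclv : ∀ D ∈ Δ, NCl.ClosedV D)
    (Ξ Ξ' : Ctxx L) (hΞ : CtxWF Ξ)
    (Gs Gs' : List (NGoal L)) (Φ Φ' : Finset (NCon L))
    (hstep : OStep Δ ⟨Ξ, Gs, Φ⟩ ⟨Ξ', Gs', Φ'⟩)
    (Cs' : List (NCon L)) (h' : List.Forall₂ (RG Δ Ξ') Gs' Cs') :
    ∃ Cs : List (NCon L),
      List.Forall₂ (RG Δ Ξ) Gs Cs ∧
      ∀ θ : ℕ → Tm L, SubstOk Ξ' θ →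
        (∀ E ∈ Φ', ConSat (E.subst θ)) → (∀ E ∈ Cs', ConSat (E.subst θ)) →
        (∀ E ∈ Φ, ConSat (E.subst θ)) ∧ ∀ E ∈ Cs, ConSat (E.subst θ) := by
  cases hstep with
  | @back _ _ _ D A G hD hF =>
    cases h' with
    | cons h t =>
      exact ⟨_, .cons (.back _ _ _ _ _ hD hF h) t, fun θ _ h1 h2 => ⟨h1, h2⟩⟩
  | con =>
    exact ⟨_ :: Cs', .cons (.con _ _) h', fun θ _ h1 h2 =>
      ⟨fun E hE => h1 E (Finset.mem_insert_of_mem hE),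
        List.forall_mem_cons.2 ⟨h1 _ (Finset.mem_insert_self _ _), h2⟩⟩⟩
  | top =>
    exact ⟨NCon.tt :: Cs', .cons (.top _) h', fun θ _ h1 h2 =>
      ⟨h1, List.forall_mem_cons.2 ⟨by simp only [NCon.subst, ConSat], h2⟩⟩⟩
  | and =>
    cases h' with
    | cons ha t =>
      cases t with
      | cons hb t =>
        refine ⟨_, .cons (.andR _ _ _ _ _ ha hb) t, fun θ _ h1 h2 => ⟨h1, ?_⟩⟩
        simp only [List.forall_mem_cons] at h2
        refine List.forall_mem_cons.2 ⟨?_, h2.2.2⟩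
        simp only [NCon.subst, ConSat]
        exact ⟨h2.1, h2.2.1⟩
  | or₁ =>
    cases h' with
    | cons h t => exact ⟨_, .cons (.orR₁ _ _ _ _ h) t, fun θ _ h1 h2 => ⟨h1, h2⟩⟩
  | or₂ =>
    cases h' with
    | cons h t => exact ⟨_, .cons (.orR₂ _ _ _ _ h) t, fun θ _ h1 h2 => ⟨h1, h2⟩⟩
  | ex =>
    cases h' with
    | cons h t =>
      refine ⟨_, .cons (.exR _ _ _ _ _ h) (t.imp fun _ _ h => h.ctx Ξ),
        fun θ hθ h1 h2 => ⟨h1, ?_⟩⟩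
      rw [List.forall_mem_cons] at h2
      exact List.forall_mem_cons.2 ⟨ConSat.ex_intro hθ.1 h2.1, h2.2⟩
  | nu =>
    cases h' with
    | cons h t =>
      refine ⟨_, .cons (.nuR _ _ _ _ h) (t.imp fun _ _ h => h.ctx Ξ),
        fun θ hθ h1 h2 => ⟨h1, ?_⟩⟩
      rw [List.forall_mem_cons] at h2
      exact List.forall_mem_cons.2 ⟨ConSat.nu_intro h2.1, h2.2⟩

end
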